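/- Let s, n₁ ≥ 0 and let V₁ be an s×s integer matrix whose top-left 2n₁×2n₁ block is Alexander trivial. Let g, n₂ ≥ 0, m = n₂ + g, and let V₂ be a 2m×2m integer matrix such that: (i) the top-left 2n₂×2n₂ block A of V₂ is Alexander trivial, and (ii) V₂ − V₂ᵀ = (A − Aᵀ) ⊕ J_{2g}. Then for every integer w ≥ 1, the block diagonal matrix V₁ ⊕ S_w(V₂) is congruent over ℤ to an integer matrix whose top-left block of size 2(n₁ + wm − g) × 2(n₁ + wm − g) is Alexander trivial. -/

import Mathlib

open Matrix Polynomial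

/-- `S_w(V)`: the `wN×wN` block matrix with `(i,j)`-block `V` for `i ≤ j` and `Vᵀ` for `i > j`. -/
def cableS {R : Type*} [CommRing R] {ι : Type*} (w : ℕ) (V : Matrix ι ι R) :
    Matrix (Fin w × ι) (Fin w × ι) R :=
  Matrix.of fun i j => if i.1 ≤ j.1 then V i.2 j.2 else V j.2 i.2

/-- The Alexander determinant polynomial `det(t·B − Bᵀ)` of an integer square matrix `B`. -/
noncomputable def alexPoly {ι : Type*} [Fintype ι] [DecidableEq ι] (B : Matrix ι ι ℤ) : ℤ[X] :=
  ((X : ℤ[X]) • B.map (fun a : ℤ => (a : ℤ[X]))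
    - Bᵀ.map (fun a : ℤ => (a : ℤ[X]))).det


set_option linter.unusedSimpArgs false

theorem det_scalar_add_nilp {R n : Type*} [CommRing R] [Fintype n] [DecidableEq n]
    (L : Matrix n n R) (r : n → ℕ) (h : ∀ p q, r q ≤ r p → L p q = 0) (c : R) :
    (c • (1 : Matrix n n R) + L).det = c ^ Fintype.card n := by
  have hbt : (c • (1 : Matrix n n R) + L).BlockTriangular r := by
    intro p q hpq
    have : p ≠ q := by rintro rfl; exact lt_irrefl _ hpq
    simp [h p q hpq.le, Matrix.one_apply, this]
  rw [hbt.det]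
  have hb : ∀ a, ((c • (1 : Matrix n n R) + L).toSquareBlock r a).det
      = c ^ (Finset.univ.filter fun p => r p = a).card := by
    intro a
    have : (c • (1 : Matrix n n R) + L).toSquareBlock r a = c • 1 := by
      ext ⟨p, hp⟩ ⟨q, hq⟩
      have h0 : L p q = 0 := h p q (by rw [hp, hq])
      simp [Matrix.toSquareBlock_def, Matrix.one_apply, h0, Subtype.ext_iff]
    rw [this, Matrix.det_smul, Matrix.det_one, mul_one, Fintype.card_subtype]
  simp_rw [hb]
  rw [Finset.prod_pow_eq_pow_sum, ← Finset.card_eq_sum_card_image, Finset.card_univ]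

/-- the next-index operator attached to a partial map -/
def shM (R : Type*) [CommRing R] {n : Type*} [DecidableEq n] (nx : n → Option n) :
    Matrix n n R := Matrix.of fun p q => if nx p = some q then 1 else 0

theorem shM_mul {R n m : Type*} [CommRing R] [Fintype n] [DecidableEq n]
    (nx : n → Option n) (M : Matrix n m R) (p : n) (q : m) :
    (shM R nx * M) p q = (nx p).elim 0 (fun r => M r q) := by
  rw [Matrix.mul_apply]
  cases h : nx p with
  | none => simp [shM, h]
  | some r => simp [shM, h]

theorem one_sub_shM_mul {R n m : Type*} [CommRing R] [Fintype n] [DecidableEq n]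
    (nx : n → Option n) (M : Matrix n m R) (p : n) (q : m) :
    ((1 - shM R nx) * M : Matrix n m R) p q = M p q - (nx p).elim 0 (fun r => M r q) := by
  rw [Matrix.sub_mul, Matrix.one_mul, Matrix.sub_apply, shM_mul]

theorem mul_one_sub_shM_transpose {R n m : Type*} [CommRing R] [Fintype n] [DecidableEq n]
    (nx : n → Option n) (M : Matrix m n R) (p : m) (q : n) :
    (M * (1 - shM R nx)ᵀ : Matrix m n R) p q = M p q - (nx q).elim 0 (fun r => M p r) := by
  have := one_sub_shM_mul nx Mᵀ q p
  rw [← Matrix.transpose_apply (M * _), Matrix.transpose_mul, Matrix.transpose_transpose, this]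
  rfl

theorem det_one_sub_shM {R n : Type*} [CommRing R] [Fintype n] [DecidableEq n]
    (nx : n → Option n) (r : n → ℕ) (h : ∀ p q, nx p = some q → r p < r q) :
    (1 - shM R nx).det = 1 := by
  have := det_scalar_add_nilp (-shM R nx) r (by
    intro p q hpq
    have : nx p ≠ some q := fun h' => absurd (h p q h') (not_lt.mpr hpq)
    simp [shM, this]) 1
  simpa [sub_eq_add_neg] using this

/-- successor on `Fin (k+1)` -/
def nxF (k : ℕ) : Fin (k + 1) → Option (Fin (k + 1)) :=
  Fin.lastCases none (fun i => some i.succ)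

theorem nxF_castSucc (k : ℕ) (i : Fin k) : nxF k i.castSucc = some i.succ := by simp [nxF]
theorem nxF_last (k : ℕ) : nxF k (Fin.last k) = none := by simp [nxF]

theorem nxF_lt (k : ℕ) (i j : Fin (k + 1)) (h : nxF k i = some j) : i.val < j.val := by
  induction i using Fin.lastCases with
  | last => simp [nxF_last] at h
  | cast i => rw [nxF_castSucc] at h; cases h; simp

/-- polynomial-entry version -/
noncomputable def pm {m n : Type*} (B : Matrix m n ℤ) : Matrix m n ℤ[X] :=
  B.map (fun a : ℤ => (a : ℤ[X]))

theorem alexPoly_eq {ι : Type*} [Fintype ι] [DecidableEq ι] (B : Matrix ι ι ℤ) :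
    alexPoly B = ((X : ℤ[X]) • pm B - pm Bᵀ).det := rfl

theorem alexPoly_submatrix_equiv {ι κ : Type*} [Fintype ι] [DecidableEq ι] [Fintype κ]
    [DecidableEq κ] (B : Matrix ι ι ℤ) (e : κ ≃ ι) :
    alexPoly (B.submatrix e e) = alexPoly B := by
  rw [alexPoly_eq, alexPoly_eq, ← Matrix.det_submatrix_equiv_self e]
  rfl

theorem det_skew_eq_one {ι : Type*} [Fintype ι] [DecidableEq ι] (A : Matrix ι ι ℤ) (n : ℕ)
    (h : alexPoly A = X ^ n) : (pm A - pm Aᵀ).det = 1 := by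
  have h1 := congrArg (Polynomial.compRingHom (1 : ℤ[X])) h
  rw [alexPoly_eq, RingHom.map_det] at h1
  simp only [Polynomial.coe_compRingHom_apply, X_pow_comp, one_pow] at h1
  rw [← h1]
  congr 1
  ext i j : 1
  simp [pm]

theorem det_pow_pencil {ι : Type*} [Fintype ι] [DecidableEq ι] (A : Matrix ι ι ℤ) (n w : ℕ)
    (h : alexPoly A = X ^ n) : ((X ^ w : ℤ[X]) • pm A - pm Aᵀ).det = X ^ (w * n) := by
  have h1 := congrArg (Polynomial.compRingHom (X ^ w : ℤ[X])) h
  rw [alexPoly_eq, RingHom.map_det] at h1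
  simp only [Polynomial.coe_compRingHom_apply, X_pow_comp] at h1
  rw [pow_mul, ← h1]
  congr 1
  ext i j : 1
  simp [pm]

theorem alexPoly_fromBlocks_diag {ι κ : Type*} [Fintype ι] [DecidableEq ι] [Fintype κ]
    [DecidableEq κ] (A : Matrix ι ι ℤ) (B : Matrix κ κ ℤ) :
    alexPoly (Matrix.fromBlocks A 0 0 B) = alexPoly A * alexPoly B := by
  simp only [alexPoly_eq]
  rw [← Matrix.det_fromBlocks_zero₁₂ _ 0]
  congr 1
  ext (i | i) (j | j) : 2 <;> simp [pm]

/-- split off the last block -/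
def splitLast (k : ℕ) (ι : Type*) : (Fin k × ι) ⊕ ι ≃ Fin (k + 1) × ι where
  toFun := Sum.elim (fun p => (p.1.castSucc, p.2)) (fun x => (Fin.last k, x))
  invFun p := Fin.lastCases (motive := fun _ => (Fin k × ι) ⊕ ι)
    (Sum.inr p.2) (fun i => Sum.inl (i, p.2)) p.1
  left_inv := by rintro (⟨i, x⟩ | x) <;> simp
  right_inv := by
    rintro ⟨i, x⟩
    induction i using Fin.lastCases <;> simp

theorem alexPoly_cableS {ι : Type*} [Fintype ι] [DecidableEq ι] (A : Matrix ι ι ℤ) (n k : ℕ)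
    (h : alexPoly A = X ^ n) : alexPoly (cableS (k + 1) A) = X ^ ((k + 1) * n) := by
  set C := (X : ℤ[X]) • pm (cableS (k + 1) A) - pm (cableS (k + 1) A)ᵀ with hC
  let nx : Fin (k + 1) × ι → Option (Fin (k + 1) × ι) := fun p => (nxF k p.1).map (fun i => (i, p.2))
  have hL : (1 - shM ℤ[X] nx).det = 1 := by
    apply det_one_sub_shM nx (fun p => p.1.val)
    rintro ⟨i, x⟩ ⟨j, y⟩ hij
    simp only [nx, Option.map_eq_some_iff] at hij
    obtain ⟨a, ha, hb⟩ := hij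
    cases hb
    exact nxF_lt k _ _ ha
  let U : Matrix (Fin k) (Fin k) ℤ[X] := (X : ℤ[X]) • 1 +
    Matrix.of fun i j => if i.val + 1 = j.val then -1 else 0
  have hU : U.det = X ^ k := by
    have := det_scalar_add_nilp (R := ℤ[X])
      (Matrix.of fun i j : Fin k => if i.val + 1 = j.val then -1 else 0)
      (fun i => i.val) (by intro p q hpq; simp; lia) X
    simpa using this
  let D := pm A - pm Aᵀ
  let UD : Matrix (Fin k × ι) (Fin k × ι) ℤ[X] := Matrix.kroneckerMap (· * ·) U D
  have hUD : UD.det = X ^ (k * Fintype.card ι) := by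
    have := Matrix.det_kronecker U D
    rw [det_skew_eq_one A n h, hU, one_pow, mul_one, ← pow_mul] at this
    exact this
  let u : Matrix (Fin k × ι) ι ℤ[X] := Matrix.of fun p y => if p.1.val + 1 = k then - D p.2 y else 0
  let ro : Matrix ι (Fin k × ι) ℤ[X] := Matrix.of fun x q => (X - 1) * pm Aᵀ x q.2
  let c : Matrix (Fin k × ι) ι ℤ[X] := Matrix.of fun p y => if p.2 = y then X ^ p.1.val else 0
  have hT : ((1 - shM ℤ[X] nx) * C).submatrix (splitLast k ι) (splitLast k ι)
      = Matrix.fromBlocks UD u ro ((X : ℤ[X]) • pm A - pm Aᵀ) := by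
    apply Matrix.ext
    rintro (⟨i, x⟩ | x) (⟨j, y⟩ | y)
    all_goals simp only [Matrix.submatrix_apply, one_sub_shM_mul]
    · simp only [splitLast, Equiv.coe_fn_mk, Sum.elim_inl, nx, nxF_castSucc, Option.map_some,
        Option.elim_some, hC, Matrix.fromBlocks_apply₁₁, UD, U, D, Matrix.kroneckerMap_apply]
      simp only [pm, cableS, Matrix.sub_apply, Matrix.smul_apply, Matrix.map_apply,
        Matrix.transpose_apply, Matrix.of_apply, Matrix.add_apply, Matrix.one_apply, smul_eq_mul,
        Fin.le_def, Fin.val_castSucc, Fin.val_succ, Fin.ext_iff]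
      rcases lt_trichotomy i.val j.val with h1 | h1 | h1
      · by_cases h2 : i.val + 1 = j.val
        · simp [h1.le, h1.not_ge, h1.ne, h2]
        · have h3 : i.val + 1 < j.val := by lia
          simp [h1.le, h1.not_ge, h1.ne, h2, h3.le, h3.not_ge]
      · simp [h1]; ring
      · have h2 : ¬ (i.val + 1 ≤ j.val) := by lia
        have h3 : ¬ (i.val + 1 = j.val) := by lia
        have h4 : j.val ≤ i.val + 1 := by lia
        simp [h1.le, h1.not_ge, h1.ne', h2, h3, h4]
    · simp only [splitLast, Equiv.coe_fn_mk, Sum.elim_inl, Sum.elim_inr, nx, nxF_castSucc,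
        Option.map_some,
        Option.elim_some, hC, Matrix.fromBlocks_apply₁₂, u, D]
      simp only [pm, cableS, Matrix.sub_apply, Matrix.smul_apply, Matrix.map_apply,
        Matrix.transpose_apply, Matrix.of_apply, smul_eq_mul,
        Fin.le_def, Fin.val_castSucc, Fin.val_succ, Fin.val_last]
      have h1 := i.isLt
      by_cases h2 : i.val + 1 = k
      · simp [h1.le, h1.not_ge, h2]
      · have h3 : i.val + 1 < k := by lia
        simp [h1.le, h1.not_ge, h2, h3.le, h3.not_ge]
    · simp only [splitLast, Equiv.coe_fn_mk, Sum.elim_inl, Sum.elim_inr, nx, nxF_last,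
        Option.map_none,
        Option.elim_none, hC, Matrix.fromBlocks_apply₂₁, ro]
      simp only [pm, cableS, Matrix.sub_apply, Matrix.smul_apply, Matrix.map_apply,
        Matrix.transpose_apply, Matrix.of_apply, smul_eq_mul,
        Fin.le_def, Fin.val_castSucc, Fin.val_last]
      have h1 := j.isLt
      simp [h1.le, h1.not_ge]; ring
    · simp [splitLast, nx, nxF_last, hC, pm, cableS]
  have hTK : Matrix.fromBlocks UD u ro ((X : ℤ[X]) • pm A - pm Aᵀ) *
      Matrix.fromBlocks 1 c 0 ((X ^ k : ℤ[X]) • 1) =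
      Matrix.fromBlocks UD 0 ro ((X ^ (k+1) : ℤ[X]) • pm A - pm Aᵀ) := by
    rw [Matrix.fromBlocks_multiply]
    congr 1
    · simp
    · apply Matrix.ext
      rintro ⟨i, x⟩ y
      simp only [Matrix.add_apply, Matrix.mul_apply, Fintype.sum_prod_type, c, UD,
        Matrix.kroneckerMap_apply, Matrix.of_apply, mul_ite, mul_zero, Finset.sum_ite_eq',
        Finset.mem_univ, if_true, Matrix.zero_apply, Matrix.mul_smul, Matrix.mul_one,
        Matrix.smul_apply, u, smul_eq_mul, U, Matrix.one_apply, add_mul, Finset.sum_add_distrib,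
        ite_mul, zero_mul, mul_one, Finset.sum_ite_eq]
      by_cases h2 : i.val + 1 = k
      · have h3 : ∀ j : Fin k, i.val + 1 ≠ j.val := by intro j; lia
        have h4 : (X : ℤ[X]) ^ k = X ^ i.val * X := by rw [← pow_succ, h2]
        simp only [h3, if_false, Finset.sum_const_zero]
        rw [if_pos h2, h4]; ring
      · have h3 : ∀ j : Fin k, (i.val + 1 = j.val) ↔ (⟨i.val + 1, by lia⟩ : Fin k) = j := by
          intro j; rw [Fin.ext_iff]
        simp only [h3, h2, if_false, Finset.sum_ite_eq, Finset.mem_univ, if_true]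
        ring
    · simp
    · apply Matrix.ext
      intro x y
      simp only [Matrix.add_apply, Matrix.mul_apply, Fintype.sum_prod_type, c, ro,
        Matrix.of_apply, mul_ite, mul_zero, Finset.sum_ite_eq',
        Finset.mem_univ, if_true, Matrix.mul_smul, Matrix.mul_one, Matrix.sub_apply,
        Matrix.smul_apply, smul_eq_mul]
      have hg := mul_geom_sum (X : ℤ[X]) k
      rw [← Fin.sum_univ_eq_sum_range (fun j => (X : ℤ[X]) ^ j), Finset.mul_sum] at hg
      have : ∑ j : Fin k, (X - 1) * pm Aᵀ x y * (X : ℤ[X]) ^ j.val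
          = (X ^ k - 1) * pm Aᵀ x y := by
        rw [← hg, Finset.sum_mul]
        exact Finset.sum_congr rfl fun _ _ => by ring
      rw [this]; ring
  have hd := congrArg Matrix.det hTK
  rw [Matrix.det_mul, Matrix.det_fromBlocks_zero₁₂, Matrix.det_fromBlocks_zero₂₁, ← hT,
    Matrix.det_submatrix_equiv_self, Matrix.det_mul, hL, hUD, det_pow_pencil A n _ h,
    Matrix.det_smul, Matrix.det_one, Matrix.det_one, one_mul, one_mul, mul_one, ← pow_mul,
    mul_comm] at hd
  rw [alexPoly_eq]
  exact mul_left_cancel₀ (pow_ne_zero _ X_ne_zero) hd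

theorem det_three {α β R : Type*} [Fintype α] [DecidableEq α] [Fintype β] [DecidableEq β]
    [CommRing R] (C : Matrix α α R) (E : Matrix α β R) (P Q H : Matrix β β R) (G : Matrix β α R) :
    (Matrix.fromBlocks (Matrix.fromBlocks C 0 0 0) (Matrix.fromRows E P)
      (Matrix.fromCols G Q) H).det = C.det * (-P).det * Q.det := by
  let U1 : Matrix ((α ⊕ β) ⊕ β) ((α ⊕ β) ⊕ β) R :=
    Matrix.fromBlocks 1 (Matrix.fromRows 0 (-1)) 0 1
  let U2 : Matrix ((α ⊕ β) ⊕ β) ((α ⊕ β) ⊕ β) R :=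
    Matrix.fromBlocks 1 0 (Matrix.fromCols 0 1) 1
  have hK : Matrix.fromBlocks (Matrix.fromBlocks C 0 0 0) (Matrix.fromRows E P)
      (Matrix.fromCols G Q) H = Matrix.fromBlocks (Matrix.fromBlocks C (-E) 0 (-P)) 0
        (Matrix.fromCols G (-H)) Q * U1 * U2 * U1 := by
    simp only [U1, U2, Matrix.fromBlocks_multiply, Matrix.fromBlocks_mul_fromRows,
      Matrix.fromCols_mul_fromRows, Matrix.fromRows_mul_fromCols]
    ext ((i | i) | i) ((j | j) | j) : 2 <;>
      simp [Matrix.mul_apply, Fintype.sum_sum_type, Matrix.one_apply]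
  rw [hK]
  simp only [Matrix.det_mul, U1, U2, Matrix.det_fromBlocks_zero₁₂, Matrix.det_fromBlocks_zero₂₁,
    Matrix.det_one]
  ring

theorem exists_reindex {σ τ : Type*} [Fintype σ] [DecidableEq σ] [Fintype τ] [DecidableEq τ]
    (φ : σ → τ) (hφ : Function.Injective φ) (a b : ℕ) (hσ : Fintype.card σ = a)
    (hτ : Fintype.card τ = a + b) :
    ∃ e : τ ≃ Fin a ⊕ Fin b, ∀ M : Matrix τ τ ℤ,
      alexPoly (Matrix.reindex e e M).toBlocks₁₁ = alexPoly (M.submatrix φ φ) := by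
  let f : σ ≃ Fin a := Fintype.equivFinOfCardEq hσ
  let e1 : σ ≃ Set.range φ := Equiv.ofInjective φ hφ
  have hc : Fintype.card ((Set.range φ)ᶜ : Set τ) = b := by
    rw [Fintype.card_compl_set, ← Fintype.card_congr e1]; lia
  let e2 := Fintype.equivFinOfCardEq hc
  let e : τ ≃ Fin a ⊕ Fin b :=
    (Equiv.Set.sumCompl (Set.range φ)).symm.trans (Equiv.sumCongr (e1.symm.trans f) e2)
  refine ⟨e, fun M => ?_⟩
  have : (Matrix.reindex e e M).toBlocks₁₁ = (M.submatrix φ φ).submatrix f.symm f.symm := by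
    ext i j
    simp [Matrix.toBlocks₁₁, e, e1]
  rw [this, alexPoly_submatrix_equiv]

set_option maxHeartbeats 4000000 in
/-- let `V₁` be an `s×s` integer matrix whose top-left `2n₁×2n₁` block is
Alexander trivial, and let `V₂` be a `2m×2m` integer matrix, `m = n₂ + g` (indexed by
`Fin (2n₂) ⊕ (Fin g ⊕ Fin g)`), whose top-left `2n₂×2n₂` block `A` is Alexander trivial
and with `V₂ − V₂ᵀ = (A − Aᵀ) ⊕ J_{2g}`. Then for every `w ≥ 1` the block diagonal
matrix `V₁ ⊕ S_w(V₂)` is congruent over `ℤ` to a matrix whose top-left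
`2(n₁+wm−g)×2(n₁+wm−g)` block is Alexander trivial. -/
theorem satellite_algebraic_genus (s n₁ n₂ g w : ℕ) (hw : 1 ≤ w) (hs : 2 * n₁ ≤ s)
    (V₁ : Matrix (Fin s) (Fin s) ℤ)
    (hA₁ : alexPoly (V₁.submatrix (Fin.castLE hs) (Fin.castLE hs)) = (X : ℤ[X]) ^ n₁)
    (V₂ : Matrix (Fin (2 * n₂) ⊕ (Fin g ⊕ Fin g)) (Fin (2 * n₂) ⊕ (Fin g ⊕ Fin g)) ℤ)
    (hA₂ : alexPoly (Matrix.toBlocks₁₁ V₂) = (X : ℤ[X]) ^ n₂)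
    (hV₂ : V₂ - V₂ᵀ = Matrix.fromBlocks
      (Matrix.toBlocks₁₁ V₂ - (Matrix.toBlocks₁₁ V₂)ᵀ) 0 0
      (Matrix.fromBlocks 0 1 (-1) 0)) :
    ∃ (P : Matrix (Fin s ⊕ (Fin w × (Fin (2 * n₂) ⊕ (Fin g ⊕ Fin g))))
        (Fin s ⊕ (Fin w × (Fin (2 * n₂) ⊕ (Fin g ⊕ Fin g)))) ℤ)
      (e : (Fin s ⊕ (Fin w × (Fin (2 * n₂) ⊕ (Fin g ⊕ Fin g))))
        ≃ (Fin (2 * (n₁ + w * (n₂ + g) - g)) ⊕ Fin (s - 2 * n₁ + 2 * g))),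
      IsUnit P.det ∧
      alexPoly ((Matrix.reindex e e
          (P * Matrix.fromBlocks V₁ 0 0 (cableS w V₂) * Pᵀ)).toBlocks₁₁)
        = (X : ℤ[X]) ^ (n₁ + w * (n₂ + g) - g) := by
  obtain ⟨k, rfl⟩ : ∃ k, w = k + 1 := ⟨w - 1, by lia⟩
  -- entries of `V₂ - V₂ᵀ`
  have hD : ∀ p q, V₂ p q - V₂ q p = Matrix.fromBlocks
      (Matrix.toBlocks₁₁ V₂ - (Matrix.toBlocks₁₁ V₂)ᵀ) 0 0
      (Matrix.fromBlocks 0 1 (-1) 0) p q := fun p q => by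
    rw [← hV₂]; rfl
  have hAa : ∀ x y, V₂ (Sum.inl x) (Sum.inr (Sum.inl y)) = V₂ (Sum.inr (Sum.inl y)) (Sum.inl x) := by
    intro x y
    have := hD (Sum.inl x) (Sum.inr (Sum.inl y))
    simp at this; lia
  have haa : ∀ x y, V₂ (Sum.inr (Sum.inl x)) (Sum.inr (Sum.inl y))
      = V₂ (Sum.inr (Sum.inl y)) (Sum.inr (Sum.inl x)) := by
    intro x y
    have := hD (Sum.inr (Sum.inl x)) (Sum.inr (Sum.inl y))
    simp at this; lia
  have hab : ∀ x y, V₂ (Sum.inr (Sum.inl x)) (Sum.inr (Sum.inr y))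
      = V₂ (Sum.inr (Sum.inr y)) (Sum.inr (Sum.inl x)) + if x = y then 1 else 0 := by
    intro x y
    have := hD (Sum.inr (Sum.inl x)) (Sum.inr (Sum.inr y))
    simp [Matrix.one_apply] at this; lia
  let nx : Fin s ⊕ (Fin (k + 1) × (Fin (2 * n₂) ⊕ (Fin g ⊕ Fin g))) →
      Option (Fin s ⊕ (Fin (k + 1) × (Fin (2 * n₂) ⊕ (Fin g ⊕ Fin g)))) := fun p =>
    match p with
    | Sum.inr (i, Sum.inr (Sum.inl x)) =>
        (nxF k i).map (fun j => Sum.inr (j, Sum.inr (Sum.inl x)))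
    | _ => none
  have hP : (1 - shM ℤ nx).det = 1 := by
    apply det_one_sub_shM nx (fun p => Sum.elim (fun _ => 0) (fun q => q.1.val) p)
    rintro (i | ⟨i, x | x | x⟩) q hq <;> simp only [nx, reduceCtorEq] at hq
    obtain ⟨a, ha, rfl⟩ := Option.map_eq_some_iff.mp hq
    exact nxF_lt k _ _ ha
  let φ : Fin (2 * n₁) ⊕ (((Fin (k + 1) × Fin (2 * n₂)) ⊕ (Fin k × Fin g)) ⊕ (Fin k × Fin g)) →
      Fin s ⊕ (Fin (k + 1) × (Fin (2 * n₂) ⊕ (Fin g ⊕ Fin g))) := fun p =>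
    match p with
    | Sum.inl i => Sum.inl (Fin.castLE hs i)
    | Sum.inr (Sum.inl (Sum.inl (i, x))) => Sum.inr (i, Sum.inl x)
    | Sum.inr (Sum.inl (Sum.inr (i, x))) => Sum.inr (i.castSucc, Sum.inr (Sum.inl x))
    | Sum.inr (Sum.inr (i, x)) => Sum.inr (i.succ, Sum.inr (Sum.inr x))
  have hφ : Function.Injective φ := by
    rintro (i | ((⟨i, x⟩ | ⟨i, x⟩) | ⟨i, x⟩)) (j | ((⟨j, y⟩ | ⟨j, y⟩) | ⟨j, y⟩)) hij <;>
      simp [φ] at hij ⊢ <;> exact hij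
  have hexp : n₁ + (k + 1) * (n₂ + g) - g = n₁ + ((k + 1) * n₂ + k * g) := by
    have : n₁ + (k + 1) * (n₂ + g) = n₁ + ((k + 1) * n₂ + k * g) + g := by ring
    lia
  obtain ⟨e, he⟩ := exists_reindex φ hφ (2 * (n₁ + (k + 1) * (n₂ + g) - g)) (s - 2 * n₁ + 2 * g)
    (by rw [hexp]; simp; ring)
    (by
      rw [hexp]; simp
      obtain ⟨r, rfl⟩ := Nat.exists_eq_add_of_le hs
      rw [Nat.add_sub_cancel_left]; ring)
  refine ⟨1 - shM ℤ nx, e, by rw [hP]; exact isUnit_one, ?_⟩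
  rw [he, hexp]
  set B := ((1 - shM ℤ nx) * Matrix.fromBlocks V₁ 0 0 (cableS (k + 1) V₂) * (1 - shM ℤ nx)ᵀ) with hB
  set K := (B.submatrix φ φ).toBlocks₂₂ with hK
  have hent : ∀ p q, B p q = Matrix.fromBlocks V₁ 0 0 (cableS (k + 1) V₂) p q
      - (nx p).elim 0 (fun r => Matrix.fromBlocks V₁ 0 0 (cableS (k + 1) V₂) r q)
      - (nx q).elim 0 (fun t => Matrix.fromBlocks V₁ 0 0 (cableS (k + 1) V₂) p t
        - (nx p).elim 0 (fun r => Matrix.fromBlocks V₁ 0 0 (cableS (k + 1) V₂) r t)) := by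
    intro p q
    rw [hB, mul_one_sub_shM_transpose]
    simp only [one_sub_shM_mul]
  have hsplit : B.submatrix φ φ
      = Matrix.fromBlocks (V₁.submatrix (Fin.castLE hs) (Fin.castLE hs)) 0 0 K := by
    apply Matrix.ext
    rintro (i | ((⟨i, x⟩ | ⟨i, x⟩) | ⟨i, x⟩)) (j | ((⟨j, y⟩ | ⟨j, y⟩) | ⟨j, y⟩))
    all_goals first
      | rfl
      | (rw [Matrix.submatrix_apply, hent]; simp [φ, nx, nxF_castSucc])
  rw [hsplit, alexPoly_fromBlocks_diag, hA₁, pow_add]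
  congr 1
  let N : Matrix (Fin k × Fin g) (Fin k × Fin g) ℤ := Matrix.of fun p q =>
    if p.1.val = q.1.val + 1 ∧ p.2 = q.2 then 1 else 0
  have hK11 : ∀ p q, K (Sum.inl (Sum.inl p)) (Sum.inl (Sum.inl q))
      = cableS (k + 1) (Matrix.toBlocks₁₁ V₂) p q := by
    intro p q
    rw [hK]; change B _ _ = _; rw [hent]
    simp [φ, nx, cableS, Matrix.toBlocks₁₁]
  have hK12 : ∀ p q, K (Sum.inl (Sum.inl p)) (Sum.inl (Sum.inr q)) = 0 := by
    intro p q
    rw [hK]; change B _ _ = _; rw [hent]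
    simp [φ, nx, cableS, nxF_castSucc, hAa]
  have hK21 : ∀ p q, K (Sum.inl (Sum.inr p)) (Sum.inl (Sum.inl q)) = 0 := by
    intro p q
    rw [hK]; change B _ _ = _; rw [hent]
    simp [φ, nx, cableS, nxF_castSucc, hAa]
  have hK22 : ∀ p q, K (Sum.inl (Sum.inr p)) (Sum.inl (Sum.inr q)) = 0 := by
    intro p q
    rw [hK]; change B _ _ = _; rw [hent]
    simp [φ, nx, cableS, nxF_castSucc, haa p.2 q.2]
  have hK23 : ∀ p q, K (Sum.inl (Sum.inr p)) (Sum.inr q) = N p q := by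
    intro p q
    rw [hK]; change B _ _ = _; rw [hent]
    simp only [φ, nx, cableS, nxF_castSucc, N, Matrix.fromBlocks_apply₂₂, Matrix.of_apply,
      Option.map_some, Option.elim_some, Option.elim_none, hab, Fin.le_def, Fin.val_succ,
      Fin.val_castSucc]
    split_ifs <;> first | lia | simp_all
  have hK32 : ∀ p q, K (Sum.inr p) (Sum.inl (Sum.inr q)) = (1 : Matrix _ _ ℤ) p q := by
    rintro ⟨i, x⟩ ⟨j, y⟩
    rw [hK]; change B _ _ = _; rw [hent]
    simp only [φ, nx, cableS, nxF_castSucc, Matrix.fromBlocks_apply₂₂, Matrix.of_apply,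
      Option.map_some, Option.elim_some, Option.elim_none, hab, Fin.le_def, Fin.val_succ,
      Fin.val_castSucc, Matrix.one_apply, Prod.mk.injEq, Fin.ext_iff (a := i), eq_comm (a := y)]
    split_ifs <;> first | lia | simp_all
  have hdet : (X : ℤ[X]) • pm K - pm Kᵀ = Matrix.fromBlocks
      (Matrix.fromBlocks ((X : ℤ[X]) • pm (cableS (k + 1) (Matrix.toBlocks₁₁ V₂))
        - pm (cableS (k + 1) (Matrix.toBlocks₁₁ V₂))ᵀ) 0 0 0)
      (Matrix.fromRows (Matrix.of fun p q => X * (K (Sum.inl (Sum.inl p)) (Sum.inr q) : ℤ[X])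
          - (K (Sum.inr q) (Sum.inl (Sum.inl p)) : ℤ[X])) ((X : ℤ[X]) • pm N - 1))
      (Matrix.fromCols (Matrix.of fun p q => X * (K (Sum.inr p) (Sum.inl (Sum.inl q)) : ℤ[X])
          - (K (Sum.inl (Sum.inl q)) (Sum.inr p) : ℤ[X])) ((X : ℤ[X]) • 1 + -pm Nᵀ))
      ((X : ℤ[X]) • pm K.toBlocks₂₂ - pm (K.toBlocks₂₂)ᵀ) := by
    apply Matrix.ext
    rintro ((p | p) | p) ((q | q) | q)
    · simp [pm, hK11]
    · simp [pm, hK12, hK21]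
    · simp [pm]
    · simp [pm, hK12, hK21]
    · simp [pm, hK22]
    · simp [pm, hK23, hK32, Matrix.one_apply, eq_comm]
    · simp [pm]
    · simp [pm, hK23, hK32, Matrix.one_apply, sub_eq_add_neg]
    · simp [pm, Matrix.toBlocks₂₂]
  rw [alexPoly_eq, hdet, det_three, ← alexPoly_eq, alexPoly_cableS _ _ _ hA₂]
  have hd1 : (-((X : ℤ[X]) • pm N - 1)).det = 1 := by
    have := det_scalar_add_nilp (-((X : ℤ[X]) • pm Nᵀ)) (fun p => p.1.val) (by
      intro p q hpq
      have h' : ¬ (q.1.val = p.1.val + 1) := by lia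
      simp [pm, N, h']) 1
    rw [← Matrix.det_transpose]
    rw [one_pow] at this
    rw [← this]
    congr 1
    apply Matrix.ext
    intro p q
    simp [pm, Matrix.one_apply, eq_comm, sub_eq_add_neg]
  have hd2 : ((X : ℤ[X]) • 1 + -pm Nᵀ).det = X ^ (k * g) := by
    have := det_scalar_add_nilp (-pm Nᵀ) (fun p => p.1.val) (by
      intro p q hpq
      have h' : ¬ (q.1.val = p.1.val + 1) := by lia
      simp [pm, N, h']) X
    simpa using this
  rw [hd1, hd2, mul_one, pow_add]
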